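/- Let φ be an elliptic automorphism of D of order 3 with fixed point a ∈ D \ {0}. Then the numerical range W(C_φ*) of the adjoint of the composition operator C_φ on H²(D) is an open subset of ℂ; in particular, for every α ∈ ℝ there is no unit vector f ∈ H²(D) with Re(e^{−iα} ⟨C_φ* f, f⟩) = sup{Re(e^{−iα} ⟨C_φ* g, g⟩) : g ∈ H²(D), ‖g‖ = 1}. -/

import Mathlib

/-!
The composition operator is diagonalized by the powers of a Blaschke factor. With
`b(z) = (z - a) / (1 - ā z)`, the Schwarz lemma gives `b ∘ φ = ω b` for a primitive cube root of
unity `ω`, so `T bⁿ = ωⁿ bⁿ`. Multiplication `A` by `b` is an isometry of `H²`, the powers `bⁿ`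
are total, and their Gram matrix `⟨bⁿ⁺ᵏ, bⁿ⟩ = (-a)ᵏ` is Toeplitz with tridiagonal inverse.

Suppose a unit vector `f` maximizes `Re (κ ⟨T* f, f⟩)`, with maximum `μ`. Then
`κ T* f + κ̄ T f = 2μ f`. Since `ω³ = 1`, the isometry `A³` commutes with `T`, so `A³ f` is again a
maximizer and solves the same equation. Pairing this equation with the system dual to the `bⁿ`,
which consists of eigenvectors of `T*`, gives a three-term recurrence for the moments `⟨f, bⁿ⟩`.
Its leading coefficient is `±a` times `κ ω̄ⁿ⁺¹ + κ̄ ωⁿ - 2μ`, which does not vanish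
because `a ≠ 0`, `μ ≠ 0` and `ω ≠ 1`. Hence a solution with `f(0) = 0` is zero
(`RotModel.eq_zero_of_eigen`).
Applied to `A³ f - (-a)³ f` this yields `A³ f = (-a)³ f`, contradicting that `A` is isometric
and `|a| < 1` (`RotModel.exists_lt`).

So no nonzero real-linear functional attains its maximum on the numerical range. The numerical range
is convex by the Toeplitz–Hausdorff theorem (`convex_numericalRange`), and a convex plane set with
this property is open (`isOpen_of_forall_exists_lt`).
-/

open scoped InnerProductSpace ComplexConjugate

noncomputable section

/-- The Hardy space `H²(D)` modeled via its Taylor coefficient sequences as `ℓ²(ℕ, ℂ)`,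
with inner product `⟨f, g⟩ = Σ aₙ conj(bₙ)` (equal to Mathlib's `⟪g, f⟫_ℂ`). -/
abbrev H2 : Type := lp (fun _ : ℕ => ℂ) 2

/-- The holomorphic function on the unit disk whose Taylor coefficients are `f`. -/
def H2.toFun (f : H2) (z : ℂ) : ℂ := ∑' n : ℕ, f n * z ^ n

/-- The open unit disk in `ℂ`. -/
def unitDisk : Set ℂ := Metric.ball 0 1

/-- `φ` is an elliptic automorphism of the unit disk of order `p` with fixed point `a`:
a holomorphic bijection of the disk onto itself fixing `a ∈ D`, such that `p` is the least
positive integer with `φ^[p] = id` on the disk. -/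
structure IsEllipticAutoOfOrder (φ : ℂ → ℂ) (a : ℂ) (p : ℕ) : Prop where
  holo : DifferentiableOn ℂ φ unitDisk
  bij : Set.BijOn φ unitDisk unitDisk
  fixed_mem : a ∈ unitDisk
  fixed : φ a = a
  order : IsLeast {n : ℕ | 0 < n ∧ Set.EqOn (φ^[n]) id unitDisk} p

/-- `T` is the composition operator `C_φ` on `H²(D)`: `(T f) = f ∘ φ` on the disk. -/
def IsCompOp (φ : ℂ → ℂ) (T : H2 →L[ℂ] H2) : Prop :=
  ∀ f : H2, ∀ z ∈ unitDisk, H2.toFun (T f) z = H2.toFun f (φ z)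

/-- The numerical range `W(T) = {⟨Tf, f⟩ : ‖f‖ = 1}` (with the paper's inner product,
which is `⟪f, T f⟫_ℂ` in Mathlib's convention). -/
def numRange (T : H2 →L[ℂ] H2) : Set ℂ := {w | ∃ f : H2, ‖f‖ = 1 ∧ ⟪f, T f⟫_ℂ = w}


/-! ### Convexity of numerical ranges and openness of convex sets -/

/-- A convex plane set on which no nonzero real-linear functional attains a maximum is open: an
empty interior would make some functional constant on it, and a boundary point belonging to it
would have a supporting functional. The functionals are written as `w ↦ Re (c w)`. -/
lemma isOpen_of_forall_exists_lt {W : Set ℂ} (hW : Convex ℝ W)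
    (h : ∀ c : ℂ, c ≠ 0 → ∀ w ∈ W, ∃ w' ∈ W, (c * w).re < (c * w').re) : IsOpen W := by
  have key : ∀ l : ℂ →ₗ[ℝ] ℝ, l ≠ 0 → ∀ w ∈ W, ∃ w' ∈ W, l w < l w' := by
    intro l hl
    have hlw : ∀ w : ℂ, l w = (((l 1 : ℂ) - Complex.I * (l Complex.I : ℂ)) * w).re := by
      intro w
      have : w = w.re • (1 : ℂ) + w.im • Complex.I := by simp
      conv_lhs => rw [this, map_add, map_smul, map_smul]
      simp
      ring
    have hc : (l 1 : ℂ) - Complex.I * (l Complex.I : ℂ) ≠ 0 := by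
      intro h0
      apply hl
      ext w
      simp [hlw w, h0]
    intro w hw
    obtain ⟨w', hw', hlt⟩ := h _ hc w hw
    exact ⟨w', hw', by rwa [hlw w, hlw w']⟩
  rcases W.eq_empty_or_nonempty with rfl | ⟨w₀, hw₀⟩
  · exact isOpen_empty
  have hint : (interior W).Nonempty := by
    rw [hW.interior_nonempty_iff_affineSpan_eq_top]
    by_contra hne
    have hv : vectorSpan ℝ W ≠ ⊤ := by
      intro h'
      exact hne ((AffineSubspace.affineSpan_eq_top_iff_vectorSpan_eq_top_of_nonempty
        (k := ℝ) (V := ℂ) (P := ℂ) ⟨w₀, hw₀⟩).2 h')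
    obtain ⟨l, hl, hle⟩ := Submodule.exists_le_ker_of_lt_top _ (lt_top_iff_ne_top.2 hv)
    obtain ⟨w', hw', hlt⟩ := key l hl w₀ hw₀
    have : l (w' - w₀) = 0 := hle (vsub_mem_vectorSpan ℝ hw' hw₀)
    rw [map_sub] at this
    linarith
  rw [← interior_eq_iff_isOpen]
  refine subset_antisymm interior_subset fun w hw => ?_
  by_contra hwi
  obtain ⟨l, hl⟩ := geometric_hahn_banach_open_point hW.interior isOpen_interior hwi
  have hle : ∀ w' ∈ W, l w' ≤ l w := by
    intro w' hw'
    have h1 : w' ∈ closure (interior W) := by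
      rw [hW.closure_interior_eq_closure_of_nonempty_interior hint]
      exact subset_closure hw'
    have h2 : closure (interior W) ⊆ {x | l x ≤ l w} :=
      closure_minimal (fun x hx => (hl x hx).le) (isClosed_le l.continuous continuous_const)
    exact h2 h1
  have hl0 : (l : ℂ →ₗ[ℝ] ℝ) ≠ 0 := by
    intro h0
    obtain ⟨x, hx⟩ := hint
    have := hl x hx
    have h3 : ∀ y, l y = 0 := fun y => by
      simpa using congrArg (fun m : ℂ →ₗ[ℝ] ℝ => m y) h0
    rw [h3, h3] at this
    exact lt_irrefl _ this
  obtain ⟨w', hw', hlt⟩ := key l hl0 w hw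
  exact absurd (hle w' hw') (not_le.2 hlt)

section
variable {E : Type*} [NormedAddCommGroup E] [InnerProductSpace ℂ E]

/-- The Toeplitz–Hausdorff theorem. Given two values at unit vectors `f`, `g`, the operator is
normalized affinely so that they become `0` and `1`; after a change of phase of `g` the form is
real along the segment from `f` to `g`, and the intermediate value theorem applies. -/
lemma convex_numericalRange (T : E →L[ℂ] E) :
    Convex ℝ {w : ℂ | ∃ f : E, ‖f‖ = 1 ∧ ⟪f, T f⟫_ℂ = w} := by
  rw [convex_iff_segment_subset]
  rintro _ ⟨f, hf, rfl⟩ _ ⟨g, hg, rfl⟩ w hw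
  by_cases hne : ⟪f, T f⟫_ℂ = ⟪g, T g⟫_ℂ
  · rw [← hne, segment_same] at hw
    exact ⟨f, hf, hw.symm⟩
  set p := ⟪f, T f⟫_ℂ with hp
  set r := ⟪g, T g⟫_ℂ with hr
  have hd : r - p ≠ 0 := sub_ne_zero.2 (Ne.symm hne)
  -- The sesquilinear form of `(T - p) / (r - p)`, which is `0` at `f` and `1` at `g`.
  let b : E → E → ℂ := fun x y => (⟪x, T y⟫_ℂ - p * ⟪x, y⟫_ℂ) / (r - p)
  have hff : ⟪f, f⟫_ℂ = 1 := by rw [inner_self_eq_norm_sq_to_K, hf]; simp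
  have hgg : ⟪g, g⟫_ℂ = 1 := by rw [inner_self_eq_norm_sq_to_K, hg]; simp
  have bf : b f f = 0 := by simp only [b, hff, ← hp]; simp
  have bg : b g g = 1 := by simp only [b, hgg, ← hr, mul_one]; exact div_self hd
  -- A unimodular `z` making the cross term `z b(f,g) + z̄ b(g,f)` real.
  obtain ⟨z, hz, hzim⟩ : ∃ z : ℂ, ‖z‖ = 1 ∧ (z * b f g + conj z * b g f).im = 0 := by
    set d := b f g - conj (b g f) with hdd
    have him : ∀ z : ℂ, (z * b f g + conj z * b g f).im = (z * d).im := by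
      intro z
      simp [hdd]
      ring
    by_cases h0 : d = 0
    · exact ⟨1, by simp, by rw [him, h0]; simp⟩
    · have hn : (‖d‖ : ℂ) ≠ 0 := by simpa using h0
      refine ⟨conj d / ‖d‖, by simp [h0], ?_⟩
      rw [him, div_mul_eq_mul_div, mul_comm, Complex.mul_conj]
      rw [← Complex.ofReal_div, Complex.ofReal_im]
  let y : ℝ → E := fun t => ((1 - t : ℝ) : ℂ) • f + ((t : ℂ) * z) • g
  have hzz : conj z * z = 1 := by
    rw [mul_comm, Complex.mul_conj, Complex.normSq_eq_norm_sq, hz]; simp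
  have by_ : ∀ t : ℝ, b (y t) (y t) =
      (((1 - t) * t * (z * b f g + conj z * b g f).re + t ^ 2 : ℝ) : ℂ) := by
    intro t
    have e1 : b (y t) (y t) = ((1 - t : ℝ) : ℂ) ^ 2 * b f f +
        ((1 - t : ℝ) : ℂ) * t * (z * b f g + conj z * b g f) +
        (t : ℂ) ^ 2 * (conj z * z) * b g g := by
      simp only [b, y, map_add, map_smul, inner_add_left, inner_add_right, inner_smul_left,
        inner_smul_right, map_mul, Complex.conj_ofReal]
      field_simp
      ring
    have e2 : z * b f g + conj z * b g f = ((z * b f g + conj z * b g f).re : ℂ) := by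
      exact Complex.ext rfl (by rw [hzim, Complex.ofReal_im])
    rw [e1, bf, bg, hzz, e2]
    push_cast
    rw [Complex.ofReal_re]
    ring
  have hy0 : ∀ t : ℝ, y t ≠ 0 := by
    intro t h0
    have hk : ((1 - t : ℝ) : ℂ) • f = -(((t : ℂ) * z) • g) := eq_neg_of_add_eq_zero_left h0
    -- `f` and `g` would be proportional, hence would give the form the same value.
    have e1 : ((1 - t : ℝ) : ℂ) * conj ((1 - t : ℝ) : ℂ) * b f f
        = ((t : ℂ) * z) * conj ((t : ℂ) * z) * b g g := by
      have : b (((1 - t : ℝ) : ℂ) • f) (((1 - t : ℝ) : ℂ) • f)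
          = b (((t : ℂ) * z) • g) (((t : ℂ) * z) • g) := by
        rw [hk]; simp only [b, map_neg, inner_neg_neg]
      simp only [b, map_smul, inner_smul_left, inner_smul_right] at this ⊢
      linear_combination this
    rw [bf, bg] at e1
    have ht : t = 0 := by
      have : ((t : ℂ)) * t * (conj z * z) = 0 := by
        simp only [map_mul, Complex.conj_ofReal] at e1
        linear_combination -e1
      rw [hzz] at this
      simpa using this
    subst ht
    have : f = 0 := by simpa using hk
    rw [this] at hf
    simp at hf
  have hyc : Continuous y := by fun_prop
  let F : ℝ → ℝ := fun t => ((1 - t) * t * (z * b f g + conj z * b g f).re + t ^ 2) / ‖y t‖ ^ 2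
  have hF : ContinuousOn F (Set.Icc 0 1) := by
    apply Continuous.continuousOn
    apply Continuous.div (by fun_prop) (by fun_prop)
    intro t
    have := hy0 t
    positivity
  have hF0 : F 0 = 0 := by simp [F]
  have hF1 : F 1 = 1 := by simp [F, y, norm_smul, hz, hg]
  rw [segment_eq_image'] at hw
  obtain ⟨θ, hθ, rfl⟩ := hw
  obtain ⟨t, -, ht⟩ := intermediate_value_Icc (zero_le_one) hF (by rw [hF0, hF1]; exact hθ)
  have hn : (‖y t‖ : ℂ) ≠ 0 := by simpa using hy0 t
  refine ⟨((‖y t‖⁻¹ : ℝ) : ℂ) • y t, ?_, ?_⟩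
  · rw [norm_smul]
    have := hy0 t
    simp [this]
  · have h1 : ⟪y t, T (y t)⟫_ℂ - p * ⟪y t, y t⟫_ℂ = (r - p) * b (y t) (y t) := by
      simp only [b]; field_simp
    rw [inner_self_eq_norm_sq_to_K, by_] at h1
    have h2 : (θ : ℂ) * (‖y t‖ : ℂ) ^ 2
        = (((1 - t) * t * (z * b f g + conj z * b g f).re + t ^ 2 : ℝ) : ℂ) := by
      rw [← ht]
      simp only [F]
      push_cast
      field_simp
    rw [← h2] at h1
    simp only [map_smul, inner_smul_left, inner_smul_right, Complex.conj_ofReal,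
      Complex.real_smul]
    push_cast
    field_simp
    have hform : ⟪y t, T (y t)⟫_ℂ - p * (‖y t‖ : ℂ) ^ 2 = (r - p) * (θ * (‖y t‖ : ℂ) ^ 2) := h1
    linear_combination hform

end

/-! ### An isometry, a cyclic vector and a rotation -/

section
open ContinuousLinearMap (adjoint)
variable {E : Type*} [NormedAddCommGroup E] [InnerProductSpace ℂ E]

/-- A vector at which `g ↦ Re (κ ⟨T* g, g⟩)` attains its maximum `μ` relative to `‖g‖²` is an
eigenvector: it annihilates the nonnegative form of `2μ - κ T* - κ̄ T`. -/
lemma eigen_of_extremal [CompleteSpace E] (T : E →L[ℂ] E) (κ : ℂ) (μ : ℝ)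
    (hμ : ∀ g : E, (κ * ⟪g, adjoint T g⟫_ℂ).re ≤ μ * ‖g‖ ^ 2) (f : E)
    (hf : (κ * ⟪f, adjoint T f⟫_ℂ).re = μ * ‖f‖ ^ 2) :
    κ • adjoint T f + conj κ • T f = (2 * μ : ℂ) • f := by
  set Q : E → E := fun g => (2 * μ : ℂ) • g - κ • adjoint T g - conj κ • T g with hQ
  have hform : ∀ g : E, (⟪g, Q g⟫_ℂ).re = 2 * (μ * ‖g‖ ^ 2 - (κ * ⟪g, adjoint T g⟫_ℂ).re) := by
    intro g
    have h1 : ⟪g, T g⟫_ℂ = conj ⟪g, adjoint T g⟫_ℂ := by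
      rw [inner_conj_symm, ContinuousLinearMap.adjoint_inner_left]
    have h2 : ⟪g, g⟫_ℂ = ((‖g‖ ^ 2 : ℝ) : ℂ) := by
      rw [inner_self_eq_norm_sq_to_K]; norm_cast
    simp only [hQ, inner_sub_right, inner_smul_right, h1, h2]
    rw [← map_mul, Complex.sub_re, Complex.sub_re, Complex.conj_re]
    simp only [Complex.mul_re, Complex.re_ofNat, Complex.ofReal_re, Complex.im_ofNat, Complex.ofReal_im]
    ring
  have hpos : ∀ g : E, 0 ≤ (⟪g, Q g⟫_ℂ).re := fun g => by rw [hform]; linarith [hμ g]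
  have hf0 : (⟪f, Q f⟫_ℂ).re = 0 := by rw [hform, hf]; ring
  have hsym : ∀ x y : E, ⟪x, Q y⟫_ℂ = ⟪Q x, y⟫_ℂ := by
    intro x y
    simp only [hQ, inner_sub_right, inner_smul_right, inner_sub_left, inner_smul_left,
      ContinuousLinearMap.adjoint_inner_left, ContinuousLinearMap.adjoint_inner_right]
    simp only [map_mul, Complex.conj_ofReal, Complex.conj_conj, map_ofNat]
    ring
  -- Nonnegativity of the form at `f + t • Q f`.
  have hquad : ∀ t : ℝ, 0 ≤ 2 * t * ‖Q f‖ ^ 2 + t ^ 2 * (⟪Q f, Q (Q f)⟫_ℂ).re := by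
    intro t
    have h := hpos (f + (t : ℂ) • Q f)
    have hlin : Q (f + (t : ℂ) • Q f) = Q f + (t : ℂ) • Q (Q f) := by
      simp only [hQ, map_add, map_smul, map_sub, smul_add, smul_sub, smul_comm (t : ℂ)]
      abel
    have h3 : ⟪Q f, Q f⟫_ℂ = ((‖Q f‖ ^ 2 : ℝ) : ℂ) := by
      rw [inner_self_eq_norm_sq_to_K]; norm_cast
    rw [hlin, inner_add_left, inner_add_right, inner_add_right, inner_smul_left, inner_smul_left,
      inner_smul_right, inner_smul_right, hsym f (Q f), h3, Complex.conj_ofReal, Complex.add_re,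
      Complex.add_re, hf0, Complex.add_re] at h
    simp only [Complex.re_ofReal_mul, Complex.ofReal_re] at h
    linarith
  have hQf : ‖Q f‖ ^ 2 = 0 := by
    by_contra hne
    have hp : 0 < ‖Q f‖ ^ 2 := lt_of_le_of_ne (by positivity) (Ne.symm hne)
    set N := ‖Q f‖ ^ 2
    set K := (⟪Q f, Q (Q f)⟫_ℂ).re
    have hK : 0 ≤ K := hpos _
    have h := hquad (-(N / (K + 1)))
    have : 2 * -(N / (K + 1)) * N + (-(N / (K + 1))) ^ 2 * K
        = - (N ^ 2 * (K + 2)) / (K + 1) ^ 2 := by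
      field_simp
      ring
    rw [this] at h
    have : 0 < N ^ 2 * (K + 2) / (K + 1) ^ 2 := by positivity
    rw [neg_div] at h
    linarith
  have hz : Q f = 0 := by simpa using hQf
  have : (2 * μ : ℂ) • f - (κ • adjoint T f + conj κ • T f) = 0 := by
    rw [← hz, hQ]; simp only; abel
  exact (sub_eq_zero.1 this).symm

/-- The leading coefficient of the recurrence in `RotModel.eq_zero_of_eigen`. If
`2μ = κ ω̄ⁿ⁺¹ + κ̄ ωⁿ`, then conjugation multiplies the right side by `ω`, while `2μ` is real. -/
lemma coeff_ne {ω κ : ℂ} (hω : conj ω * ω = 1) (hω1 : ω ≠ 1) {μ : ℝ} (hμ : μ ≠ 0) (n : ℕ) :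
    κ * conj ω ^ (n + 1) + conj κ * ω ^ n - 2 * μ ≠ 0 := by
  intro h
  have h2 := congrArg conj h
  simp only [map_sub, map_add, map_mul, map_pow, Complex.conj_conj, map_zero, Complex.conj_ofReal,
    map_ofNat] at h2
  have h3 : (2 * μ : ℂ) * (ω - 1) = 0 := by
    rw [pow_succ] at h h2
    linear_combination h2 - ω * h + κ * conj ω ^ n * hω
  rcases mul_eq_zero.1 h3 with h4 | h4
  · simp [hμ] at h4
  · exact hω1 (sub_eq_zero.1 h4)

/-- An isometry `A` with a cyclic vector `v 0`, whose orbit is `v n = Aⁿ (v 0)` and whose Gram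
matrix is `⟨v n, v 0⟩ = qⁿ` (linear in the first slot). Cyclicity is stated as totality of the
orbit. In the Hardy space, `A` is multiplication by the disk automorphism `z ↦ (z - a) / (1 - ā z)`,
`v 0 = 1` and `q = -a`. -/
structure RotModel (A : E →ₗᵢ[ℂ] E) (v : ℕ → E) (q : ℂ) : Prop where
  map_v : ∀ n, A (v n) = v (n + 1)
  inner_v : ∀ n, ⟪v 0, v n⟫_ℂ = q ^ n
  total : ∀ x, (∀ n, ⟪v n, x⟫_ℂ = 0) → x = 0

namespace RotModel
variable {A : E →ₗᵢ[ℂ] E} {v : ℕ → E} {q : ℂ}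

lemma inner_add (h : RotModel A v q) (m k : ℕ) : ⟪v m, v (m + k)⟫_ℂ = q ^ k := by
  induction m with
  | zero => simpa using h.inner_v k
  | succ m ih =>
    rw [show m + 1 + k = m + k + 1 by ring, ← h.map_v, ← h.map_v, A.inner_map_map, ih]

lemma inner_add' (h : RotModel A v q) (m k : ℕ) : ⟪v (m + k), v m⟫_ℂ = conj q ^ k := by
  rw [← inner_conj_symm, h.inner_add, map_pow]

lemma norm_v (h : RotModel A v q) (n : ℕ) : ‖v n‖ = 1 := by
  have h1 := h.inner_add n 0
  rw [add_zero, pow_zero, inner_self_eq_norm_sq_to_K] at h1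
  have h2 : ‖v n‖ ^ 2 = 1 := by
    have h3 : ((‖v n‖ ^ 2 : ℝ) : ℂ) = ((1 : ℝ) : ℂ) := by push_cast; exact h1
    exact Complex.ofReal_injective h3
  exact (pow_eq_one_iff_of_nonneg (norm_nonneg _) two_ne_zero).1 h2

variable [CompleteSpace E]

lemma inner_map (h : RotModel A v q) (x : E) : ⟪v 0, A x⟫_ℂ = q * ⟪v 0, x⟫_ℂ := by
  have e : adjoint A.toContinuousLinearMap (v 0) = conj q • v 0 := by
    rw [← sub_eq_zero]
    refine h.total _ fun n => ?_
    have h1 := h.inner_add' 0 n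
    have h2 := h.inner_add' 0 (n + 1)
    rw [zero_add] at h1 h2
    rw [inner_sub_right, ContinuousLinearMap.adjoint_inner_right, inner_smul_right,
      LinearIsometry.coe_toContinuousLinearMap, h.map_v, h1, h2]
    ring
  have e2 := ContinuousLinearMap.adjoint_inner_left A.toContinuousLinearMap x (v 0)
  rw [e, inner_smul_left, Complex.conj_conj] at e2
  exact e2.symm

/-- If `T` is diagonal on the orbit `v`, a vector orthogonal to all `v k` with `k ≠ n` is an
eigenvector of `T*`. -/
lemma adjoint_dual (h : RotModel A v q) {T : E →L[ℂ] E} {ω : ℂ}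
    (hT : ∀ n, T (v n) = ω ^ n • v n) {n : ℕ} {u : E}
    (hu : ∀ k, k ≠ n → ⟪v k, u⟫_ℂ = 0) : adjoint T u = conj ω ^ n • u := by
  rw [← sub_eq_zero]
  refine h.total _ fun k => ?_
  rw [inner_sub_right, ContinuousLinearMap.adjoint_inner_right, hT, inner_smul_left,
    inner_smul_right, map_pow]
  by_cases hk : k = n
  · simp [hk]
  · simp [hu k hk]

/-- The vector of the dual system that is orthogonal to `v k` for `k ≠ 0`. -/
lemma adjoint_dual_zero (h : RotModel A v q) {T : E →L[ℂ] E} {ω : ℂ}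
    (hT : ∀ n, T (v n) = ω ^ n • v n) :
    adjoint T (v 0 - conj q • v 1) = v 0 - conj q • v 1 := by
  have := h.adjoint_dual hT (n := 0) (u := v 0 - conj q • v 1) ?_
  · simpa using this
  intro k hk
  obtain ⟨m, rfl⟩ := Nat.exists_eq_succ_of_ne_zero hk
  have h1 := h.inner_add' 0 (m + 1)
  have h2 := h.inner_add' 1 m
  rw [zero_add] at h1
  rw [add_comm] at h2
  rw [inner_sub_right, inner_smul_right, Nat.succ_eq_add_one, h1, h2]
  ring

/-- The vector of the dual system that is orthogonal to `v k` for `k ≠ n + 1`. It is a combination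
of three neighbours because the inverse of the Gram matrix is tridiagonal. -/
lemma adjoint_dual_succ (h : RotModel A v q) {T : E →L[ℂ] E} {ω : ℂ}
    (hT : ∀ n, T (v n) = ω ^ n • v n) (n : ℕ) :
    adjoint T ((1 + q * conj q) • v (n + 1) - q • v n - conj q • v (n + 2)) =
      conj ω ^ (n + 1) • ((1 + q * conj q) • v (n + 1) - q • v n - conj q • v (n + 2)) := by
  refine h.adjoint_dual hT fun k hk => ?_
  rw [inner_sub_right, inner_sub_right, inner_smul_right, inner_smul_right, inner_smul_right]
  rcases lt_or_gt_of_ne hk with hlt | hgt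
  · obtain ⟨m, rfl⟩ := Nat.exists_eq_add_of_le (Nat.lt_succ_iff.1 hlt)
    have h1 := h.inner_add k m
    have h2 := h.inner_add k (m + 1)
    have h3 := h.inner_add k (m + 2)
    rw [← add_assoc] at h2 h3
    rw [h1, h2, h3]
    ring
  · obtain ⟨m, rfl⟩ := Nat.exists_eq_add_of_lt hgt
    have h1 := h.inner_add' n (m + 2)
    have h2 := h.inner_add' (n + 1) (m + 1)
    have h3 := h.inner_add' (n + 2) m
    rw [show n + (m + 2) = n + 1 + m + 1 by ring] at h1
    rw [show n + 1 + (m + 1) = n + 1 + m + 1 by ring] at h2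
    rw [show n + 2 + m = n + 1 + m + 1 by ring] at h3
    rw [h1, h2, h3]
    ring

/-- Pairing the eigenvalue equation with the dual system yields a three-term recurrence for the
moments `⟨f, v n⟩`, and its leading coefficient never vanishes. So an eigenvector is determined by
its moment of index `0`. -/
lemma eq_zero_of_eigen (h : RotModel A v q) (hq0 : q ≠ 0) {T : E →L[ℂ] E} {ω : ℂ}
    (hT : ∀ n, T (v n) = ω ^ n • v n) (hω : conj ω * ω = 1) (hω1 : ω ≠ 1)
    {κ : ℂ} {μ : ℝ} (hμ : μ ≠ 0) {f : E}
    (hf : κ • adjoint T f + conj κ • T f = (2 * μ : ℂ) • f) (hf0 : ⟪v 0, f⟫_ℂ = 0) : f = 0 := by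
  have hTf : ∀ u : E, κ * ⟪T u, f⟫_ℂ + conj κ * ⟪adjoint T u, f⟫_ℂ - 2 * μ * ⟪u, f⟫_ℂ = 0 := by
    intro u
    have := congrArg (fun x => ⟪u, x⟫_ℂ) hf
    simp only [inner_add_right, inner_smul_right, ContinuousLinearMap.adjoint_inner_right] at this
    rw [ContinuousLinearMap.adjoint_inner_left, this]
    ring
  have h1 : ⟪v 1, f⟫_ℂ = 0 := by
    have e := hTf (v 0 - conj q • v 1)
    rw [h.adjoint_dual_zero hT, map_sub, map_smul, hT, hT] at e
    simp only [inner_sub_left, inner_smul_left, hf0, map_pow, Complex.conj_conj] at e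
    have e' : q * (κ * conj ω ^ (0 + 1) + conj κ * ω ^ 0 - 2 * μ) * ⟪v 1, f⟫_ℂ = 0 := by
      linear_combination -e
    exact (mul_eq_zero.1 e').resolve_left (mul_ne_zero hq0 (coeff_ne hω hω1 hμ 0))
  have hall : ∀ n, ⟪v n, f⟫_ℂ = 0 ∧ ⟪v (n + 1), f⟫_ℂ = 0 := by
    intro n
    induction n with
    | zero => exact ⟨hf0, h1⟩
    | succ n ih =>
      refine ⟨ih.2, ?_⟩
      have e := hTf ((1 + q * conj q) • v (n + 1) - q • v n - conj q • v (n + 2))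
      rw [h.adjoint_dual_succ hT] at e
      simp only [map_sub, map_smul, hT, inner_sub_left, inner_smul_left, ih.1, ih.2, map_pow,
        Complex.conj_conj] at e
      have e' : q * (κ * conj ω ^ (n + 1 + 1) + conj κ * ω ^ (n + 1) - 2 * μ) *
          ⟪v (n + 1 + 1), f⟫_ℂ = 0 := by
        linear_combination -e
      exact (mul_eq_zero.1 e').resolve_left (mul_ne_zero hq0 (coeff_ne hω hω1 hμ (n + 1)))
  exact h.total f fun n => (hall n).1

lemma commute_cube (h : RotModel A v q) {T : E →L[ℂ] E} {ω : ℂ}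
    (hT : ∀ n, T (v n) = ω ^ n • v n) (hω3 : ω ^ 3 = 1) (x : E) :
    T (A (A (A x))) = A (A (A (T x))) := by
  have hd : Dense (Submodule.span ℂ (Set.range v) : Set E) := by
    rw [Submodule.dense_iff_topologicalClosure_eq_top, Submodule.topologicalClosure_eq_top_iff,
      Submodule.eq_bot_iff]
    intro y hy
    refine h.total y fun n => ?_
    exact (Submodule.mem_orthogonal _ _).1 hy _ (Submodule.subset_span ⟨n, rfl⟩)
  let L := A.toContinuousLinearMap ∘L A.toContinuousLinearMap ∘L A.toContinuousLinearMap
  have : T ∘L L = L ∘L T := by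
    refine ContinuousLinearMap.ext_on hd ?_
    rintro _ ⟨n, rfl⟩
    simp only [L, ContinuousLinearMap.comp_apply, LinearIsometry.coe_toContinuousLinearMap,
      h.map_v, hT, map_smul]
    rw [show n + 1 + 1 + 1 = n + 3 by ring, pow_add, hω3, mul_one]
  simpa [L] using congrArg (fun M : E →L[ℂ] E => M x) this

/-- The three values `ωᵏ` have sum zero and do not lie on one line through `0`, so an upper bound
of `Re (κ ⟨T* g, g⟩)` over unit vectors cannot be `0`. -/
lemma bound_ne_zero (h : RotModel A v q) {T : E →L[ℂ] E} {ω : ℂ}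
    (hT : ∀ n, T (v n) = ω ^ n • v n) (hω1 : ω ≠ 1) (hω3 : ω ^ 3 = 1)
    {κ : ℂ} (hκ : κ ≠ 0) {μ : ℝ}
    (hμ : ∀ g : E, ‖g‖ = 1 → (κ * ⟪g, adjoint T g⟫_ℂ).re ≤ μ) : μ ≠ 0 := by
  have hb : ∀ n, (κ * conj ω ^ n).re ≤ μ := by
    intro n
    have := hμ (v n) (h.norm_v n)
    have hvv : ⟪v n, v n⟫_ℂ = 1 := by simpa using h.inner_add n 0
    rwa [ContinuousLinearMap.adjoint_inner_right, hT, inner_smul_left, hvv, map_pow,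
      mul_one] at this
  have hsum : 1 + ω + ω ^ 2 = 0 := by
    have : (ω - 1) * (1 + ω + ω ^ 2) = 0 := by linear_combination hω3
    exact (mul_eq_zero.1 this).resolve_left (sub_ne_zero.2 hω1)
  rintro rfl
  have h0 := hb 0
  have h1 := hb 1
  have h2 := hb 2
  have hs : (κ * conj ω ^ 0).re + (κ * conj ω ^ 1).re + (κ * conj ω ^ 2).re = 0 := by
    rw [← Complex.add_re, ← Complex.add_re]
    have := congrArg conj hsum
    simp only [map_add, map_one, map_pow, map_zero] at this
    rw [show κ * conj ω ^ 0 + κ * conj ω ^ 1 + κ * conj ω ^ 2 = 0 by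
      linear_combination κ * this]
    simp
  have e0 : κ.re = 0 := by
    have : (κ * conj ω ^ 0).re = 0 := by linarith
    simpa using this
  have e1 : (κ * conj ω ^ 1).re = 0 := by linarith
  have him : κ.im ≠ 0 := fun h' => hκ (Complex.ext e0 h')
  have hωi : ω.im = 0 := by
    simp [e0] at e1
    tauto
  have hωr : ω = (ω.re : ℂ) := Complex.ext rfl (by simp [hωi])
  have := congrArg Complex.re hsum
  rw [hωr, ← Complex.ofReal_pow, ← Complex.ofReal_one, ← Complex.ofReal_add, ← Complex.ofReal_add,
    Complex.ofReal_re, Complex.zero_re] at this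
  nlinarith [sq_nonneg (ω.re + 1 / 2)]

/-- No unit vector `f` maximizes `Re (κ ⟨T* f, f⟩)`: otherwise `f` and `A³ f` would both be
maximizers, hence eigenvectors, and so would be `A³ f - q³ f`, whose moment of index `0` vanishes.
Then `A³ f = q³ f`, which is absurd as `A` is isometric and `‖q‖ < 1`. -/
lemma exists_lt (h : RotModel A v q) (hq0 : q ≠ 0) (hq1 : ‖q‖ < 1) {T : E →L[ℂ] E} {ω : ℂ}
    (hT : ∀ n, T (v n) = ω ^ n • v n) (hω1 : ω ≠ 1) (hω3 : ω ^ 3 = 1)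
    {κ : ℂ} (hκ : κ ≠ 0) {f : E} (hf : ‖f‖ = 1) :
    ∃ g : E, ‖g‖ = 1 ∧ (κ * ⟪f, adjoint T f⟫_ℂ).re < (κ * ⟪g, adjoint T g⟫_ℂ).re := by
  have hω : conj ω * ω = 1 := by
    have h1 : ‖ω‖ = 1 := Complex.norm_eq_one_of_pow_eq_one hω3 (by norm_num)
    rw [mul_comm, Complex.mul_conj, Complex.normSq_eq_norm_sq, h1]; simp
  by_contra hcon
  push Not at hcon
  set μ : ℝ := (κ * ⟪f, adjoint T f⟫_ℂ).re with hμd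
  have hμ0 : μ ≠ 0 := h.bound_ne_zero hT hω1 hω3 hκ hcon
  have hμ : ∀ g : E, (κ * ⟪g, adjoint T g⟫_ℂ).re ≤ μ * ‖g‖ ^ 2 := by
    intro g
    by_cases hg : g = 0
    · simp [hg]
    have hn : ‖g‖ ≠ 0 := by simpa using hg
    have h1 := hcon (((‖g‖⁻¹ : ℝ) : ℂ) • g) (by rw [norm_smul]; simp [hg])
    rw [map_smul, inner_smul_left, inner_smul_right, Complex.conj_ofReal,
      show κ * (((‖g‖⁻¹ : ℝ) : ℂ) * (((‖g‖⁻¹ : ℝ) : ℂ) * ⟪g, adjoint T g⟫_ℂ))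
        = (((‖g‖⁻¹) ^ 2 : ℝ) : ℂ) * (κ * ⟪g, adjoint T g⟫_ℂ) by push_cast; ring,
      Complex.re_ofReal_mul, inv_pow, inv_mul_le_iff₀ (by positivity)] at h1
    linarith
  have hE : ∀ x : E, (κ * ⟪x, adjoint T x⟫_ℂ).re = μ * ‖x‖ ^ 2 →
      κ • adjoint T x + conj κ • T x = (2 * μ : ℂ) • x := eigen_of_extremal T κ μ hμ
  have hef := hE f (by rw [hf]; simp [hμd])
  have heg := hE (A (A (A f))) (by
    rw [ContinuousLinearMap.adjoint_inner_right, h.commute_cube hT hω3, A.inner_map_map,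
      A.inner_map_map, A.inner_map_map, A.norm_map, A.norm_map, A.norm_map, hf,
      ← ContinuousLinearMap.adjoint_inner_right]
    simp [hμd])
  have hz : A (A (A f)) - q ^ 3 • f = 0 := by
    refine h.eq_zero_of_eigen hq0 hT hω hω1 hμ0 (κ := κ) (μ := μ) ?_ ?_
    · have e : κ • adjoint T (A (A (A f)) - q ^ 3 • f) + conj κ • T (A (A (A f)) - q ^ 3 • f)
          = (κ • adjoint T (A (A (A f))) + conj κ • T (A (A (A f))))
            - q ^ 3 • (κ • adjoint T f + conj κ • T f) := by
        simp only [map_sub, map_smul]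
        module
      rw [e, heg, hef]
      module
    · rw [inner_sub_right, inner_smul_right, h.inner_map, h.inner_map, h.inner_map]
      ring
  have hnorm := congrArg norm (sub_eq_zero.1 hz)
  rw [A.norm_map, A.norm_map, A.norm_map, norm_smul, hf, mul_one, norm_pow] at hnorm
  exact absurd hnorm.symm (pow_lt_one₀ (norm_nonneg _) hq1 three_ne_zero).ne
end RotModel
end

/-! ### The form of an elliptic automorphism of order three -/

/-- The automorphism `z ↦ (z - a) / (1 - ā z)` of the unit disk, for `‖a‖ < 1`. -/
def mob (a z : ℂ) : ℂ := (z - a) / (1 - conj a * z)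

lemma mob_denom_ne {a z : ℂ} (ha : ‖a‖ < 1) (hz : ‖z‖ < 1) : 1 - conj a * z ≠ 0 := by
  intro h
  have h1 : conj a * z = 1 := (sub_eq_zero.1 h).symm
  have h2 := congrArg norm h1
  rw [norm_mul, Complex.norm_conj, norm_one] at h2
  nlinarith [norm_nonneg a, norm_nonneg z]

lemma norm_mob_lt {a z : ℂ} (ha : ‖a‖ < 1) (hz : ‖z‖ < 1) : ‖mob a z‖ < 1 := by
  have hd := mob_denom_ne ha hz
  rw [mob, norm_div, div_lt_one (norm_pos_iff.2 hd)]
  refine lt_of_pow_lt_pow_left₀ 2 (norm_nonneg _) ?_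
  have e : ‖1 - conj a * z‖ ^ 2 - ‖z - a‖ ^ 2 = (1 - ‖a‖ ^ 2) * (1 - ‖z‖ ^ 2) := by
    simp only [← Complex.normSq_eq_norm_sq, Complex.normSq_apply, Complex.sub_re, Complex.sub_im,
      Complex.mul_re, Complex.mul_im, Complex.conj_re, Complex.conj_im, Complex.one_re,
      Complex.one_im]
    ring
  have h1 : 0 < 1 - ‖a‖ ^ 2 := by nlinarith [norm_nonneg a]
  have h2 : 0 < 1 - ‖z‖ ^ 2 := by nlinarith [norm_nonneg z]
  nlinarith [mul_pos h1 h2]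

lemma mob_neg_mob {a z : ℂ} (ha : ‖a‖ < 1) (hz : ‖z‖ < 1) : mob (-a) (mob a z) = z := by
  have hd := mob_denom_ne ha hz
  have hd2 := mob_denom_ne ha ha
  have e1 : mob a z - -a = (1 - conj a * a) * z / (1 - conj a * z) := by
    rw [mob, sub_neg_eq_add, eq_div_iff hd, add_mul, div_mul_cancel₀ _ hd]; ring
  have e2 : 1 - conj (-a) * mob a z = (1 - conj a * a) / (1 - conj a * z) := by
    rw [mob, map_neg]; field_simp; ring
  rw [mob, e1, e2]
  field_simp

lemma differentiableOn_mob {a : ℂ} (ha : ‖a‖ < 1) :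
    DifferentiableOn ℂ (mob a) (Metric.ball 0 1) := by
  unfold mob
  refine DifferentiableOn.div (by fun_prop) (by fun_prop) fun z hz => ?_
  exact mob_denom_ne ha (by simpa using hz)

/-- By the Schwarz lemma, `φ` becomes a rotation in the coordinate `mob a`. -/
lemma IsEllipticAutoOfOrder.exists_multiplier {φ : ℂ → ℂ} {a : ℂ}
    (hφ : IsEllipticAutoOfOrder φ a 3) :
    ∃ ω : ℂ, ω ≠ 1 ∧ ω ^ 3 = 1 ∧ ∀ z : ℂ, ‖z‖ < 1 → mob a (φ z) = ω * mob a z := by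
  have ha : ‖a‖ < 1 := by simpa [unitDisk] using hφ.fixed_mem
  have hna : ‖-a‖ < 1 := by rwa [norm_neg]
  have hφm : ∀ z : ℂ, ‖z‖ < 1 → ‖φ z‖ < 1 := fun z hz => by
    simpa [unitDisk] using hφ.bij.mapsTo (x := z) (by simpa [unitDisk] using hz)
  have hφ3 : ∀ z : ℂ, ‖z‖ < 1 → φ (φ (φ z)) = z := fun z hz =>
    hφ.order.1.2 (x := z) (by simpa [unitDisk] using hz)
  set ψ : ℂ → ℂ := fun z => mob a (φ (mob (-a) z)) with hψ
  have hinv : ∀ z : ℂ, ‖z‖ < 1 → mob a (mob (-a) z) = z := fun z hz => by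
    simpa using mob_neg_mob hna hz
  have hψm : ∀ z : ℂ, ‖z‖ < 1 → ‖ψ z‖ < 1 := fun z hz =>
    norm_mob_lt ha (hφm _ (norm_mob_lt hna hz))
  have hconj : ∀ z : ℂ, ‖z‖ < 1 → ψ (mob a z) = mob a (φ z) := fun z hz => by
    simp only [hψ]; rw [mob_neg_mob ha hz]
  have hψ3 : ∀ z : ℂ, ‖z‖ < 1 → ψ (ψ (ψ z)) = z := by
    intro z hz
    have hz' := norm_mob_lt hna hz
    rw [← hinv z hz, hconj _ hz', hconj _ (hφm _ hz'), hconj _ (hφm _ (hφm _ hz')), hφ3 _ hz']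
  have hball : Set.MapsTo ψ (Metric.ball 0 1) (Metric.closedBall 0 1) := fun z hz => by
    simpa using (hψm z (by simpa using hz)).le
  have hd : DifferentiableOn ℂ ψ (Metric.ball 0 1) := by
    refine (differentiableOn_mob ha).comp
      (DifferentiableOn.comp (t := Metric.ball 0 1) hφ.holo (differentiableOn_mob hna) ?_) ?_
    · intro z hz
      simpa using norm_mob_lt hna (by simpa using hz)
    · intro z hz
      simpa using hφm _ (norm_mob_lt hna (by simpa using hz))
  have hψ0 : ψ 0 = 0 := by
    have : mob (-a) 0 = a := by simp [mob]
    simp only [hψ]; rw [this, hφ.fixed]; simp [mob]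
  have hle : ∀ z : ℂ, ‖z‖ < 1 → ‖ψ z‖ ≤ ‖z‖ := fun z hz =>
    Complex.norm_le_norm_of_mapsTo_ball hd hball hψ0 hz
  -- `ψ` and its inverse `ψ ∘ ψ` both contract the norm, so `ψ` preserves it.
  have heq : ∀ z : ℂ, ‖z‖ < 1 → ‖ψ z‖ = ‖z‖ := fun z hz => by
    refine le_antisymm (hle z hz) ?_
    calc ‖z‖ = ‖ψ (ψ (ψ z))‖ := by rw [hψ3 z hz]
      _ ≤ ‖ψ (ψ z)‖ := hle _ (hψm _ (hψm _ hz))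
      _ ≤ ‖ψ z‖ := hle _ (hψm _ hz)
  have hhalf : ‖(1 / 2 : ℂ)‖ < 1 := by norm_num
  obtain ⟨ω, -, hω⟩ := Complex.affine_of_mapsTo_ball_of_exists_norm_dslope_eq_div' (c := 0)
    (R₁ := 1) (R₂ := 1) hd (by rwa [hψ0]) ⟨1 / 2, by simpa using hhalf, by
      rw [dslope_of_ne _ (by norm_num), slope_def_module, norm_smul, hψ0, sub_zero, sub_zero,
        heq _ hhalf]
      norm_num⟩
  have hω' : ∀ z : ℂ, ‖z‖ < 1 → ψ z = ω * z := fun z hz => by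
    have := hω (x := z) (by simpa using hz)
    simp only [hψ0, sub_zero, smul_eq_mul, zero_add] at this
    rw [this, mul_comm]
  have hrel : ∀ z : ℂ, ‖z‖ < 1 → mob a (φ z) = ω * mob a z := fun z hz => by
    rw [← hconj z hz, hω' _ (norm_mob_lt ha hz)]
  refine ⟨ω, ?_, ?_, hrel⟩
  · rintro rfl
    have h1 : (1 : ℕ) ∈ {n : ℕ | 0 < n ∧ Set.EqOn (φ^[n]) id unitDisk} := by
      refine ⟨one_pos, fun z hz => ?_⟩
      have hz : ‖z‖ < 1 := by simpa [unitDisk] using hz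
      have := hrel z hz
      rw [one_mul] at this
      rw [Function.iterate_one, id, ← mob_neg_mob ha (hφm z hz), this, mob_neg_mob ha hz]
    have := hφ.order.2 h1
    omega
  · have h := hψ3 _ hhalf
    have h1 := hψm _ hhalf
    rw [hω' _ (hψm _ h1), hω' _ h1, hω' _ hhalf] at h
    linear_combination 2 * h

/-! ### Multiplication by a disk automorphism on the Hardy space -/

lemma H2.norm_coeff_le (f : H2) (n : ℕ) : ‖f n‖ ≤ ‖f‖ := lp.norm_apply_le_norm (by norm_num) f n

lemma H2.summable_toFun (f : H2) {z : ℂ} (hz : ‖z‖ < 1) : Summable fun n => f n * z ^ n := by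
  refine Summable.of_norm_bounded (g := fun n => ‖f‖ * ‖z‖ ^ n)
    ((summable_geometric_of_lt_one (norm_nonneg z) hz).mul_left _) fun n => ?_
  rw [norm_mul, norm_pow]
  gcongr
  exact f.norm_coeff_le n

lemma H2.toFun_sub (f g : H2) {z : ℂ} (hz : ‖z‖ < 1) :
    (f - g).toFun z = f.toFun z - g.toFun z := by
  rw [H2.toFun, H2.toFun, H2.toFun, ← (f.summable_toFun hz).tsum_sub (g.summable_toFun hz)]
  refine tsum_congr fun n => ?_
  rw [lp.coeFn_sub, Pi.sub_apply]; ring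

lemma H2.toFun_smul (c : ℂ) (f : H2) (z : ℂ) : (c • f).toFun z = c * f.toFun z := by
  rw [H2.toFun, H2.toFun, ← tsum_mul_left]
  refine tsum_congr fun n => ?_
  rw [lp.coeFn_smul, Pi.smul_apply, smul_eq_mul]; ring

lemma H2.toFun_zero_right (f : H2) : f.toFun 0 = f 0 := by
  rw [H2.toFun, tsum_eq_single 0 (fun n hn => by simp [hn])]
  simp

lemma H2.eq_of_toFun_eq {f g : H2} (h : ∀ z : ℂ, ‖z‖ < 1 → f.toFun z = g.toFun z) : f = g := by
  rw [← sub_eq_zero]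
  set d := f - g with hd
  have hdz : ∀ z : ℂ, ‖z‖ < 1 → d.toFun z = 0 := fun z hz => by
    rw [hd, H2.toFun_sub _ _ hz, h z hz, sub_self]
  let p := FormalMultilinearSeries.ofScalars ℂ (fun n => d n)
  have hrad : 0 < p.radius := by
    have : ((1 : NNReal) : ENNReal) ≤ p.radius := by
      refine p.le_radius_of_bound ‖d‖ fun n => ?_
      simpa [p, FormalMultilinearSeries.ofScalars_norm] using d.norm_coeff_le n
    exact lt_of_lt_of_le (by simp) this
  have hp := (p.hasFPowerSeriesOnBall hrad).hasFPowerSeriesAt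
  have hz0 : HasFPowerSeriesAt (0 : ℂ → ℂ) p 0 := by
    refine hp.congr ?_
    filter_upwards [Metric.ball_mem_nhds (0 : ℂ) one_pos] with z hz
    have e := hdz z (by simpa using hz)
    rw [Pi.zero_apply, ← e, H2.toFun]
    simp [p, FormalMultilinearSeries.sum, mul_comm]
  have hp0 : p = 0 := hz0.eq_zero
  ext n
  have : p.coeff n = 0 := by rw [hp0]; rfl
  simpa [p, FormalMultilinearSeries.coeff_ofScalars] using this

/-- The sequence `0, f 0, f 1, …`. -/
def shiftFun (f : ℕ → ℂ) : ℕ → ℂ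
  | 0 => 0
  | n + 1 => f n

lemma shift_memℓp (f : H2) : Memℓp (E := fun _ : ℕ => ℂ) (shiftFun f) 2 := by
  have h := (memℓp_gen_iff (by norm_num)).1 (lp.memℓp f)
  refine (memℓp_gen_iff (by norm_num)).2 ?_
  rw [← summable_nat_add_iff 1]
  simpa [shiftFun] using h

/-- Multiplication by `z` on `H²`, an isometry. -/
def shift : H2 →ₗᵢ[ℂ] H2 where
  toFun f := ⟨shiftFun f, shift_memℓp f⟩
  map_add' f g := by
    ext n
    cases n
    · exact (add_zero 0).symm
    · rfl
  map_smul' c f := by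
    ext n
    cases n <;> simp [shiftFun]
  norm_map' f := by
    have h2 : (0 : ℝ) < (2 : ENNReal).toReal := by norm_num
    rw [lp.norm_eq_tsum_rpow h2, lp.norm_eq_tsum_rpow h2]
    congr 1
    change ∑' n, ‖shiftFun f n‖ ^ (2 : ENNReal).toReal = _
    rw [Summable.tsum_eq_zero_add ((memℓp_gen_iff h2).1 (shift_memℓp f))]
    simp [shiftFun]

lemma shift_succ (f : H2) (n : ℕ) : shift f (n + 1) = f n := rfl
lemma shift_zero (f : H2) : shift f 0 = 0 := rfl

lemma toFun_shift (f : H2) {z : ℂ} (hz : ‖z‖ < 1) : (shift f).toFun z = z * f.toFun z := by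
  rw [H2.toFun, ((shift f).summable_toFun hz).tsum_eq_zero_add, H2.toFun, ← tsum_mul_left,
    shift_zero, zero_mul, zero_add]
  refine tsum_congr fun n => ?_
  rw [shift_succ]; ring

/-- The constant function `1`. -/
def H2.one : H2 := lp.single 2 0 (1 : ℂ)

lemma shift_iterate_one (m : ℕ) : shift^[m] H2.one = lp.single 2 m (1 : ℂ) := by
  induction m with
  | zero => rfl
  | succ m ih =>
    rw [Function.iterate_succ_apply', ih]
    ext n
    cases n with
    | zero => rw [shift_zero]; simp [lp.single_apply]
    | succ n => rw [shift_succ]; simp [lp.single_apply, Pi.single_apply]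

lemma inner_one_left (f : H2) : ⟪H2.one, f⟫_ℂ = f 0 := by
  rw [H2.one, lp.inner_single_left]; simp

lemma toFun_one (z : ℂ) : H2.one.toFun z = 1 := by
  rw [H2.toFun, tsum_eq_single 0]
  · simp [H2.one]
  · intro n hn; simp [H2.one, lp.single_apply, hn]

/-- Multiplication by `mob a` is an isometry `A = (S - a) (1 - ā S)⁻¹` of `H²`, where `S` is the
shift. The second property is the inverse relation `S (1 + ā A) = A + a`. -/
lemma exists_mobMul {a : ℂ} (ha : ‖a‖ < 1) :
    ∃ A : H2 →ₗᵢ[ℂ] H2, (∀ (f : H2) (z : ℂ), ‖z‖ < 1 → (A f).toFun z = mob a z * f.toFun z) ∧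
      ∀ f : H2, shift f + conj a • shift (A f) = A f + a • f := by
  let S : H2 →L[ℂ] H2 := shift.toContinuousLinearMap
  have hS : ∀ f, S f = shift f := fun _ => rfl
  have hnorm : ‖conj a • S‖ < 1 := by
    rw [norm_smul, Complex.norm_conj]
    have : ‖S‖ ≤ 1 := shift.norm_toContinuousLinearMap_le
    nlinarith [norm_nonneg a, norm_nonneg S]
  have hunit : IsUnit (1 - conj a • S) := isUnit_one_sub_of_norm_lt_one hnorm
  obtain ⟨R, hR⟩ := hunit.exists_right_inv
  have hR' : ∀ f, R f - conj a • shift (R f) = f := fun f => by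
    simpa [hS] using congrArg (fun M : H2 →L[ℂ] H2 => M f) hR
  have hiso : ∀ y : H2, ‖shift y - a • y‖ = ‖y - conj a • shift y‖ := by
    intro y
    rw [← sq_eq_sq₀ (norm_nonneg _) (norm_nonneg _), @norm_sub_sq ℂ, @norm_sub_sq ℂ, norm_smul,
      norm_smul, shift.norm_map, Complex.norm_conj, inner_smul_right, inner_smul_right]
    have e : a * ⟪shift y, y⟫_ℂ = conj (conj a * ⟪y, shift y⟫_ℂ) := by
      rw [map_mul, Complex.conj_conj, inner_conj_symm]
    rw [e, RCLike.conj_re]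
  let A : H2 →ₗᵢ[ℂ] H2 :=
    { toLinearMap := ((S - a • (1 : H2 →L[ℂ] H2)) * R : H2 →L[ℂ] H2)
      norm_map' := fun f => by
        have := hiso (R f)
        rw [hR'] at this
        simpa [hS] using this }
  have hA : ∀ f, A f = shift (R f) - a • R f := fun f => by
    change ((S - a • (1 : H2 →L[ℂ] H2)) * R) f = _
    simp [hS]
  refine ⟨A, fun f z hz => ?_, fun f => ?_⟩
  · have hd := mob_denom_ne ha hz
    have e : f.toFun z = (1 - conj a * z) * (R f).toFun z := by
      conv_lhs => rw [← hR' f]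
      rw [H2.toFun_sub _ _ hz, H2.toFun_smul, toFun_shift _ hz]
      ring
    rw [hA, H2.toFun_sub _ _ hz, H2.toFun_smul, toFun_shift _ hz, e, mob]
    rw [div_mul_eq_mul_div, eq_div_iff hd]
    ring
  · have e := hR' f
    rw [hA]
    generalize R f = y at e
    subst e
    simp only [map_sub, map_smul]
    module

/-- Totality of the powers of `mob a` in `H²`: if `x` is orthogonal to all of them, the relation
`S (1 + ā A) = A + a` gives, by induction on `m`, that `tₙ = ⟨x, Sᵐ⁺¹ Aⁿ 1⟩` is a bounded
sequence with `|tₙ| = |a| |tₙ₊₁|`, hence zero. So `x` is orthogonal to all monomials. -/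
lemma rotModel_mobMul {a : ℂ} (ha : ‖a‖ < 1) {A : H2 →ₗᵢ[ℂ] H2}
    (hA : ∀ (f : H2) (z : ℂ), ‖z‖ < 1 → (A f).toFun z = mob a z * f.toFun z)
    (hS : ∀ f : H2, shift f + conj a • shift (A f) = A f + a • f) :
    RotModel A (fun n => A^[n] H2.one) (-a) ∧
      ∀ (n : ℕ) (z : ℂ), ‖z‖ < 1 → H2.toFun (A^[n] H2.one) z = mob a z ^ n := by
  have hval : ∀ (n : ℕ) (z : ℂ), ‖z‖ < 1 → H2.toFun (A^[n] H2.one) z = mob a z ^ n := by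
    intro n z hz
    induction n with
    | zero => simpa using toFun_one z
    | succ n ih => rw [Function.iterate_succ_apply', hA _ z hz, ih, pow_succ']
  refine ⟨⟨fun n => (Function.iterate_succ_apply' A n _).symm, fun n => ?_, fun x hx => ?_⟩, hval⟩
  · rw [Function.iterate_zero, id, inner_one_left, ← H2.toFun_zero_right, hval n 0 (by simp)]
    simp [mob]
  · have hone : ‖H2.one‖ = 1 := by
      rw [H2.one, lp.norm_single (by norm_num)]; simp
    have hnorm : ∀ m n : ℕ, ‖shift^[m] (A^[n] H2.one)‖ = 1 := by
      intro m n
      induction m with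
      | zero =>
        induction n with
        | zero => exact hone
        | succ n ih =>
          rw [Function.iterate_zero, id] at ih ⊢
          rw [Function.iterate_succ_apply', A.norm_map, ih]
      | succ m ih => rw [Function.iterate_succ_apply', shift.norm_map, ih]
    have hadd : ∀ (m : ℕ) (c : ℂ) (y z : H2),
        shift^[m] (y + c • z) = shift^[m] y + c • shift^[m] z := by
      intro m c y z
      induction m with
      | zero => rfl
      | succ m ih =>
        rw [Function.iterate_succ_apply', ih, map_add, map_smul, Function.iterate_succ_apply',
          Function.iterate_succ_apply']
    have hmn : ∀ m n : ℕ, ⟪shift^[m] (A^[n] H2.one), x⟫_ℂ = 0 := by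
      intro m
      induction m with
      | zero => exact hx
      | succ m ih =>
        have hstep : ∀ n : ℕ, ⟪shift^[m + 1] (A^[n] H2.one), x⟫_ℂ =
            -a * ⟪shift^[m + 1] (A^[n + 1] H2.one), x⟫_ℂ := by
          intro n
          have e := congrArg (fun y => ⟪shift^[m] y, x⟫_ℂ) (hS (A^[n] H2.one))
          simp only [hadd, inner_add_left, inner_smul_left, ← Function.iterate_succ_apply' A,
            ← Function.iterate_succ_apply shift, ih, Complex.conj_conj] at e
          linear_combination e
        have hbound : ∀ k n : ℕ, ‖⟪shift^[m + 1] (A^[n] H2.one), x⟫_ℂ‖ ≤ ‖a‖ ^ k * ‖x‖ := by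
          intro k
          induction k with
          | zero =>
            intro n
            have := norm_inner_le_norm (𝕜 := ℂ) (shift^[m + 1] (A^[n] H2.one)) x
            rwa [hnorm, ← pow_zero ‖a‖] at this
          | succ k ihk =>
            intro n
            rw [hstep, norm_mul, norm_neg, pow_succ', mul_assoc]
            exact mul_le_mul_of_nonneg_left (ihk (n + 1)) (norm_nonneg a)
        intro n
        have hlim : Filter.Tendsto (fun k : ℕ => ‖a‖ ^ k * ‖x‖) Filter.atTop (nhds 0) := by
          simpa using (tendsto_pow_atTop_nhds_zero_of_lt_one (norm_nonneg a) ha).mul_const ‖x‖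
        exact norm_le_zero_iff.1 (ge_of_tendsto' hlim fun k => hbound k n)
    ext m
    have := hmn m 0
    rw [Function.iterate_zero, id, shift_iterate_one, lp.inner_single_left] at this
    simpa using this
/-! ### The numerical range of the adjoint -/

lemma numRange_adjoint_exists_lt {φ : ℂ → ℂ} {a : ℂ} (ha : a ≠ 0)
    (hφ : IsEllipticAutoOfOrder φ a 3) {T : H2 →L[ℂ] H2} (hT : IsCompOp φ T)
    {κ : ℂ} (hκ : κ ≠ 0) {f : H2} (hf : ‖f‖ = 1) :
    ∃ g : H2, ‖g‖ = 1 ∧ (κ * ⟪f, ContinuousLinearMap.adjoint T f⟫_ℂ).re <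
      (κ * ⟪g, ContinuousLinearMap.adjoint T g⟫_ℂ).re := by
  have ha1 : ‖a‖ < 1 := by simpa [unitDisk] using hφ.fixed_mem
  obtain ⟨ω, hω1, hω3, hω⟩ := hφ.exists_multiplier
  obtain ⟨A, hA, hS⟩ := exists_mobMul ha1
  obtain ⟨hmodel, hval⟩ := rotModel_mobMul ha1 hA hS
  refine hmodel.exists_lt (neg_ne_zero.2 ha) (by rwa [norm_neg]) (fun n => ?_) hω1 hω3 hκ hf
  refine H2.eq_of_toFun_eq fun z hz => ?_
  have hzD : z ∈ unitDisk := by simpa [unitDisk] using hz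
  have hφz : ‖φ z‖ < 1 := by simpa [unitDisk] using hφ.bij.mapsTo hzD
  rw [hT _ z hzD, H2.toFun_smul, hval n _ hφz, hval n z hz, hω z hz, mul_pow]

/-- For `φ` elliptic of order 3 with fixed point `a ∈ D \\ {0}`, the
numerical range `W(C_φ*)` is open; in particular, for every `α ∈ ℝ` no unit vector attains
the supremum of `Re(e^{−iα}⟨C_φ* f, f⟩)`. -/
theorem numRange_adjoint_isOpen
    (φ : ℂ → ℂ) (a : ℂ) (ha : a ≠ 0)
    (hφ : IsEllipticAutoOfOrder φ a 3) (T : H2 →L[ℂ] H2) (hT : IsCompOp φ T) :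
    IsOpen (numRange (ContinuousLinearMap.adjoint T)) ∧
    ∀ α : ℝ, ¬ ∃ f : H2, ‖f‖ = 1 ∧
      (Complex.exp (-(α : ℂ) * Complex.I) *
        ⟪f, ContinuousLinearMap.adjoint T f⟫_ℂ).re =
      sSup {x : ℝ | ∃ g : H2, ‖g‖ = 1 ∧
        x = (Complex.exp (-(α : ℂ) * Complex.I) *
          ⟪g, ContinuousLinearMap.adjoint T g⟫_ℂ).re} := by
  refine ⟨?_, ?_⟩
  · refine isOpen_of_forall_exists_lt (convex_numericalRange _) ?_
    rintro c hc _ ⟨f, hf, rfl⟩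
    obtain ⟨g, hg, hlt⟩ := numRange_adjoint_exists_lt ha hφ hT hc hf
    exact ⟨_, ⟨g, hg, rfl⟩, hlt⟩
  · rintro α ⟨f, hf, heq⟩
    obtain ⟨g, hg, hlt⟩ := numRange_adjoint_exists_lt ha hφ hT (Complex.exp_ne_zero _) hf
    rw [heq] at hlt
    refine not_lt_of_ge (le_csSup ?_ ?_) hlt
    swap
    · exact ⟨g, hg, rfl⟩
    refine ⟨‖Complex.exp (-(α : ℂ) * Complex.I)‖ * ‖ContinuousLinearMap.adjoint T‖, ?_⟩
    rintro _ ⟨x, hx, rfl⟩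
    refine (Complex.re_le_norm _).trans ?_
    rw [norm_mul]
    gcongr
    calc ‖⟪x, ContinuousLinearMap.adjoint T x⟫_ℂ‖
        ≤ ‖x‖ * ‖ContinuousLinearMap.adjoint T x‖ := norm_inner_le_norm _ _
      _ ≤ ‖ContinuousLinearMap.adjoint T‖ := by
        rw [hx, one_mul]
        simpa [hx] using (ContinuousLinearMap.adjoint T).le_opNorm x
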